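/- There exists a widely digitally delicate prime in base 9; that is, there exists a prime p such that for every natural number i and every digit d ∈ {0, 1, ..., 8} with d ≠ digit_i(p), where digit_i(p) denotes the i-th base-9 digit of p (counting from the least significant digit, i = 0, with digit_i(p) = 0 for all i at or beyond the number of base-9 digits of p, i.e., leading zeros), the number p + (d − digit_i(p))·9^i obtained by replacing the i-th base-9 digit of p (including leading zeros) with d is not prime. -/

import Mathlib

/-- The i-th base-9 digit (from the least significant, starting at i = 0) of n;
for i at or beyond the number of base-9 digits of n this is 0 (a leading zero). -/
def digit (n i : ℕ) : ℕ := n / 9 ^ i % 9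

/-!
Raising a digit of `p` by `k` gives `p + k * 9 ^ i` with `1 ≤ k ≤ 8`. For each such `k` the
exponents `i` are covered by finitely many congruence classes, each attached to a prime `q` such
that `q ∣ p + k * 9 ^ i` throughout the class; by the Chinese remainder theorem this only
prescribes `p` modulo the product of these primes. Lowering a digit concerns only the finitely many
nonzero digits of `p`, and each resulting number has a small factor or fails Fermat's test to
base `2`. Requiring in addition that `p - 1` be divisible by a large power of `2` makes the
primality of `p` provable by Proth's theorem.
-/

theorem foldr_pow_mul_pow_mod (B m b : ℕ) (L : List ℕ) :
    L.foldr (fun d c ↦ c ^ B * b ^ d % m) (1 % m) = b ^ Nat.ofDigits B L % m := by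
  induction L with
  | nil => simp
  | cons d L ih =>
    have hpow : b ^ Nat.ofDigits B (d :: L) = (b ^ Nat.ofDigits B L) ^ B * b ^ d := by
      rw [Nat.ofDigits_cons, add_comm, pow_add, mul_comm B, pow_mul]
    rw [List.foldr_cons, ih, hpow]
    exact ((Nat.mod_modEq _ m).pow B).mul_right _

/-- The modular power `b ^ e % m`, computed by Horner's rule along the hexadecimal digits of `e`.
Processing four bits of `e` per step makes kernel evaluation several times faster than repeated
squaring. -/
def powMod (m b e : ℕ) : ℕ :=
  (Nat.digits 16 e).foldr (fun d c ↦ c ^ 16 * b ^ d % m) (1 % m)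

theorem powMod_eq (m b e : ℕ) : powMod m b e = b ^ e % m := by
  rw [powMod, foldr_pow_mul_pow_mod, Nat.ofDigits_digits]

theorem dvd_pow_add_one_of_powMod_eq_sub_one {m b e : ℕ} (hm : m ≠ 0)
    (h : powMod m b e = m - 1) : m ∣ b ^ e + 1 := by
  rw [powMod_eq] at h
  have hpow : b ^ e ≡ m - 1 [MOD m] := by
    rw [← h]
    exact (Nat.mod_modEq _ m).symm
  rw [← Nat.modEq_zero_iff_dvd]
  calc b ^ e + 1 ≡ m - 1 + 1 [MOD m] := hpow.add_right 1
    _ = m := Nat.sub_one_add_one hm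
    _ ≡ 0 [MOD m] := by simp [Nat.ModEq]

theorem not_prime_of_powMod_sub_one_ne_one {n a : ℕ} (ha : a ≠ 0) (han : a < n)
    (h : powMod n a (n - 1) ≠ 1) : ¬ n.Prime := by
  intro hn
  have hcoprime : a.Coprime n := (Nat.coprime_of_lt_prime ha han hn).symm
  have hfermat : a ^ (n - 1) ≡ 1 [MOD n] := by
    rw [← Nat.totient_prime hn]
    exact Nat.ModEq.pow_totient hcoprime
  exact h (by rw [powMod_eq, hfermat, Nat.mod_eq_of_lt hn.one_lt])

theorem proth_primality {p k e a : ℕ} (hp : p = k * 2 ^ (e + 1) + 1) (hk0 : k ≠ 0)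
    (hk : k < 2 ^ (e + 1)) (h : p ∣ a ^ (k * 2 ^ e) + 1) : p.Prime := by
  have hodd : Odd p := hp ▸ ((even_two.pow_of_ne_zero e.succ_ne_zero).mul_left k).add_one
  have hp1 : p ≠ 1 := by simp [hp, hk0]
  have hq : p.minFac.Prime := Nat.minFac_prime hp1
  have hq2 : p.minFac ≠ 2 := by
    rwa [Ne, Nat.minFac_eq_two_iff, ← even_iff_two_dvd, Nat.not_even_iff_odd]
  have hdvd : p.minFac ∣ (a ^ k) ^ 2 ^ e + 1 := by
    rw [← pow_mul]
    exact p.minFac_dvd.trans h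
  obtain ⟨j, hj⟩ := Nat.pow_pow_add_primeFactors_one_lt hq hq2 hdvd
  have hj0 : j ≠ 0 := by
    rintro rfl
    exact hq.ne_one (by simpa using hj)
  have hlt : 2 ^ (e + 1) < p.minFac := by
    rw [hj, Nat.lt_succ_iff]
    exact Nat.le_mul_of_pos_left _ (Nat.pos_of_ne_zero hj0)
  by_contra hnot
  have hsq : p.minFac ^ 2 ≤ p := Nat.minFac_sq_le_self hodd.pos hnot
  nlinarith

theorem periodic_coprime_add_mul_pow {m b N : ℕ} (hb : b ^ N ≡ 1 [MOD m]) (a k : ℕ) :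
    Function.Periodic (fun i ↦ (a + k * b ^ i).Coprime m) N := by
  intro i
  have hpow : b ^ (i + N) ≡ b ^ i [MOD m] := by
    simpa [pow_add] using hb.mul_left (b ^ i)
  exact congrArg (· = 1) ((hpow.mul_left k).add_left a).gcd_eq

theorem not_prime_add_mul_pow_of_covering {m b N a k : ℕ} (hm : m ≠ 0) (hma : m < a) (hN : N ≠ 0)
    (hb : b ^ N ≡ 1 [MOD m]) (hcover : ∀ j < N, ¬ (a + k * b ^ j).Coprime m) (i : ℕ) :
    ¬ (a + k * b ^ i).Prime := by
  intro hprime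
  have hcoprime : (a + k * b ^ i).Coprime m :=
    Nat.coprime_of_lt_prime hm (hma.trans_le (Nat.le_add_right _ _)) hprime
  rw [← (periodic_coprime_add_mul_pow hb a k).map_mod_nat i] at hcoprime
  exact hcover (i % N) (Nat.mod_lt i (Nat.pos_of_ne_zero hN)) hcoprime

theorem digit_eq_zero_of_lt {n i : ℕ} (h : n < 9 ^ i) : digit n i = 0 := by
  rw [digit, Nat.div_eq_of_lt h, Nat.zero_mod]

theorem digit_mul_pow_le (n i : ℕ) : digit n i * 9 ^ i ≤ n :=
  (Nat.mul_le_mul_right _ (Nat.mod_le _ _)).trans (Nat.div_mul_le_self _ _)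

/-- The number obtained from `n` by replacing its `i`-th base-9 digit by `d`. The truncated
subtraction is exact by `digit_mul_pow_le`. -/
def replaceDigit (n i d : ℕ) : ℕ := n - digit n i * 9 ^ i + d * 9 ^ i

theorem replaceDigit_digit_add (n i k : ℕ) :
    replaceDigit n i (digit n i + k) = n + k * 9 ^ i := by
  rw [replaceDigit, add_mul, ← add_assoc, Nat.sub_add_cancel (digit_mul_pow_le n i)]

/-- The odd part of `delicatePrime - 1`. -/
def prothCofactor : ℕ :=
  84135 *
  7369374937069283157116461311576593259591428222570401615707848630014248970339358986268061732095011

/-- The witness `p`, found by computer search among the solutions of the congruences modulo the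
prime factors of `coveringModulus` and modulo a power of `2`. -/
def delicatePrime : ℕ := prothCofactor * 2 ^ 343 + 1

/-- The product of the primes attached to the covering classes. All of them divide `9 ^ 360 - 1`,
so each class is a class modulo a divisor of `360`, the order of `9` modulo the prime. For odd `k`
the prime `2` covers everything; for `k = 4` the primes `5`, `41`, `17`, `193` serve the classes
`0 (mod 2)`, `3 (mod 4)`, `1 (mod 8)`, `5 (mod 8)`. -/
def coveringModulus : ℕ :=
  2 * 5 * 7 * 11 * 13 * 17 * 19 * 31 * 37 * 41 * 61 * 73 * 97 * 181 * 193 * 271 * 577 * 757 * 769 *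
    1181 * 1621 * 4561 * 6481 * 14401 * 387631 * 530713 * 42521761 * 47763361 * 128653413121

theorem prime_delicatePrime : delicatePrime.Prime := by
  have hpow : powMod delicatePrime 7 (prothCofactor * 2 ^ 342) = delicatePrime - 1 := by
    decide +kernel
  have hdvd : delicatePrime ∣ 7 ^ (prothCofactor * 2 ^ 342) + 1 :=
    dvd_pow_add_one_of_powMod_eq_sub_one (by decide +kernel) hpow
  exact proth_primality (by decide +kernel) (by decide +kernel) (by decide +kernel) hdvd

theorem nine_pow_modEq_one : 9 ^ 360 ≡ 1 [MOD coveringModulus] := by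
  decide +kernel

theorem not_coprime_delicatePrime_add_mul_pow_coveringModulus :
    ∀ k < 9, k ≠ 0 → ∀ j < 360, ¬ (delicatePrime + k * 9 ^ j).Coprime coveringModulus := by
  decide +kernel

theorem not_prime_delicatePrime_add_mul_pow {k : ℕ} (hk0 : k ≠ 0) (hk : k < 9) (i : ℕ) :
    ¬ (delicatePrime + k * 9 ^ i).Prime :=
  not_prime_add_mul_pow_of_covering (by decide +kernel) (by decide +kernel) (by decide)
    nine_pow_modEq_one
    (not_coprime_delicatePrime_add_mul_pow_coveringModulus k hk hk0) i

theorem not_coprime_factorial_or_powMod_ne_one_of_lt_digit :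
    ∀ i < 215, ∀ d < digit delicatePrime i,
      1000 < replaceDigit delicatePrime i d ∧
        (¬ (replaceDigit delicatePrime i d).Coprime (Nat.factorial 1000) ∨
          powMod (replaceDigit delicatePrime i d) 2 (replaceDigit delicatePrime i d - 1) ≠ 1) := by
  decide +kernel

theorem not_prime_replaceDigit_delicatePrime_of_lt {i d : ℕ} (hd : d < digit delicatePrime i) :
    ¬ (replaceDigit delicatePrime i d).Prime := by
  have hi : i < 215 := by
    by_contra! hi
    have hlt : delicatePrime < 9 ^ 215 := by decide +kernel
    have hzero := digit_eq_zero_of_lt (hlt.trans_le (Nat.pow_le_pow_right (by decide) hi))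
    omega
  obtain ⟨hlarge, hfactor | hfermat⟩ :=
    not_coprime_factorial_or_powMod_ne_one_of_lt_digit i hi d hd
  · exact fun hprime ↦ hfactor (hprime.coprime_factorial_of_lt hlarge)
  · exact not_prime_of_powMod_sub_one_ne_one two_ne_zero (by omega) hfermat

theorem not_prime_replaceDigit_delicatePrime_of_gt {i d : ℕ} (hd : d ≤ 8)
    (hgt : digit delicatePrime i < d) : ¬ (replaceDigit delicatePrime i d).Prime := by
  obtain ⟨k, rfl⟩ := Nat.exists_eq_add_of_lt hgt
  rw [add_assoc, replaceDigit_digit_add]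
  exact not_prime_delicatePrime_add_mul_pow (Nat.succ_ne_zero k) (by omega) i

/-- There exists a widely digitally delicate prime in base 9: a prime p such
that replacing any one of its base-9 digits, including any of its leading
zeros, by a different digit in {0, ..., 8} yields a number that is not prime. -/
theorem exists_widely_digitally_delicate_base_9 :
    ∃ p : ℕ, Nat.Prime p ∧
      ∀ i : ℕ, ∀ d : ℕ, d ≤ 8 → d ≠ digit p i →
        ¬ Nat.Prime (p - digit p i * 9 ^ i + d * 9 ^ i) := by
  refine ⟨delicatePrime, prime_delicatePrime, fun i d hd hne ↦ ?_⟩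
  rcases lt_or_gt_of_ne hne with hlt | hgt
  · exact not_prime_replaceDigit_delicatePrime_of_lt hlt
  · exact not_prime_replaceDigit_delicatePrime_of_gt hd hgt
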